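/- arXiv:2402.04526 — 3 statements merged into one kernel-verified Lean document; each statement's English description precedes it below -/
import Mathlib

section
/- In the split setup, for every pair (c₁,c₂) ∈ C×C: A^(5) = (A_L^(5) ∪ A_R^(5) ∪ Ā^(5)) \ {v''}, where Ā^(5) = {v₀ : ∃v₁, (v₁,v₀) ∈ A_L^(3) and v₁ ∈ A_R^(7)} ∪ {v₀ : ∃v₁,v₂, (v₀,v₁) ∈ A_L^(9), (v₁,v₂) ∈ A_R^(8) and v₂ ∈ A_L^(7)} ∪ {v₀ : ∃v₁, (v₀,v₁) ∈ A_L^(9) and v₁ ∈ A_R^(1)} ∪ {v₀ : ∃v₁, (v₁,v₀) ∈ A_R^(3) and v₁ ∈ A_L^(7)} ∪ {v₀ : ∃v₁,v₂, (v₀,v₁) ∈ A_R^(9), (v₁,v₂) ∈ A_L^(8) and v₂ ∈ A_R^(7)} ∪ {v₀ : ∃v₁, (v₀,v₁) ∈ A_R^(9) and v₁ ∈ A_L^(1)}. -/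
variable {V C : Type*}

def N1 (X : Set V) (Es : Set (Sym2 V)) (f : Sym2 V → C) (c₁ c₂ : C) : Set V :=
  {v₀ | v₀ ∈ X ∧ ∃ v₁ v₂, s(v₀, v₁) ∈ Es ∧ s(v₁, v₂) ∈ Es ∧
    f s(v₀, v₁) = c₁ ∧ f s(v₁, v₂) = c₂}

def N2 (X : Set V) (Es : Set (Sym2 V)) (f : Sym2 V → C) (c₁ c₂ : C) : Set V :=
  {v₀ | v₀ ∈ X ∧ ∃ v₁ v₂, s(v₀, v₁) ∈ Es ∧ s(v₁, v₂) ∈ Es ∧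
    f s(v₀, v₁) = c₂ ∧ f s(v₁, v₂) = c₁}

def N3 (X : Set V) (Es : Set (Sym2 V)) (f : Sym2 V → C) (c₁ c₂ : C) : Set (V × V) :=
  {p | p.1 ∈ X ∧ p.2 ∈ X ∧ ∃ v₁, s(p.1, v₁) ∈ Es ∧ s(v₁, p.2) ∈ Es ∧
    f s(p.1, v₁) = c₁ ∧ f s(v₁, p.2) = c₂}

def N4 (X : Set V) (Es : Set (Sym2 V)) (f : Sym2 V → C) (c₁ c₂ : C) : Set V :=
  {v₀ | v₀ ∈ X ∧ ∃ v₁ v₂ v₃, s(v₀, v₁) ∈ Es ∧ s(v₁, v₂) ∈ Es ∧ s(v₂, v₃) ∈ Es ∧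
    f s(v₀, v₁) = c₁ ∧ f s(v₁, v₂) = c₂ ∧ f s(v₂, v₃) = c₁}

def N5 (X : Set V) (Es : Set (Sym2 V)) (f : Sym2 V → C) (c₁ c₂ : C) : Set V :=
  {v₀ | v₀ ∈ X ∧ ∃ v₁ v₂ v₃, s(v₀, v₁) ∈ Es ∧ s(v₁, v₂) ∈ Es ∧ s(v₂, v₃) ∈ Es ∧
    f s(v₀, v₁) = c₂ ∧ f s(v₁, v₂) = c₁ ∧ f s(v₂, v₃) = c₂}

def N6 (X : Set V) (Es : Set (Sym2 V)) (f : Sym2 V → C) (c₁ c₂ : C) : Set V :=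
  {v₀ | v₀ ∈ X ∧ ∃ v, s(v₀, v) ∈ Es ∧ f s(v₀, v) = c₁}

def N7 (X : Set V) (Es : Set (Sym2 V)) (f : Sym2 V → C) (c₁ c₂ : C) : Set V :=
  {v₀ | v₀ ∈ X ∧ ∃ v, s(v₀, v) ∈ Es ∧ f s(v₀, v) = c₂}

def N8 (X : Set V) (Es : Set (Sym2 V)) (f : Sym2 V → C) (c₁ c₂ : C) : Set (V × V) :=
  {p | p.1 ∈ X ∧ p.2 ∈ X ∧ s(p.1, p.2) ∈ Es ∧ f s(p.1, p.2) = c₁}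

def N9 (X : Set V) (Es : Set (Sym2 V)) (f : Sym2 V → C) (c₁ c₂ : C) : Set (V × V) :=
  {p | p.1 ∈ X ∧ p.2 ∈ X ∧ s(p.1, p.2) ∈ Es ∧ f s(p.1, p.2) = c₂}

/-!
A vertex `v₀` belongs to `N5 X (EL ∪ ER)` when it starts a walk `v₀v₁v₂v₃` coloured `c₂, c₁, c₂`,
and each of the three edges comes from `EL` or from `ER`. A vertex at which such a walk switches
between `EL` and `ER` is incident to both, hence lies in `XL ∩ XR`; cutting the walk at its switches
therefore expresses it through the neighbour sets of the two sides. The right-hand neighbour sets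
let `v₀` range over `XR` instead of `XL`, which removing `XR \ XL` corrects.
-/

open Set

/-- The vertices incident to an edge of `E`. -/
def incidentVertices (E : Set (Sym2 V)) : Set V :=
  {v | ∃ e ∈ E, v ∈ e}

/-- The start vertices of walks `v₀v₁v₂v₃` coloured `c, d, c`, with one edge set prescribed for each
step so that a walk in a union of edge sets can be sorted by where its edges come from. -/
def altWalkStarts (E₁ E₂ E₃ : Set (Sym2 V)) (f : Sym2 V → C) (c d : C) : Set V :=
  {v₀ | ∃ v₁ v₂ v₃, s(v₀, v₁) ∈ E₁ ∧ s(v₁, v₂) ∈ E₂ ∧ s(v₂, v₃) ∈ E₃ ∧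
    f s(v₀, v₁) = c ∧ f s(v₁, v₂) = d ∧ f s(v₂, v₃) = c}

/-- The half of the set `Ā⁽⁵⁾` belonging to walks whose first edge lies in `E`: the start vertices
recovered from the neighbour sets of `(X, E)` and `(Y, F)` when the walk follows the pattern
`EEF`, `EFE` or `EFF`. -/
def crossingStarts (X Y : Set V) (E F : Set (Sym2 V)) (f : Sym2 V → C) (c₁ c₂ : C) : Set V :=
  {v₀ | ∃ v₁, (v₁, v₀) ∈ N3 X E f c₁ c₂ ∧ v₁ ∈ N7 Y F f c₁ c₂} ∪
  {v₀ | ∃ v₁ v₂, (v₀, v₁) ∈ N9 X E f c₁ c₂ ∧ (v₁, v₂) ∈ N8 Y F f c₁ c₂ ∧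
    v₂ ∈ N7 X E f c₁ c₂} ∪
  {v₀ | ∃ v₁, (v₀, v₁) ∈ N9 X E f c₁ c₂ ∧ v₁ ∈ N1 Y F f c₁ c₂}

section

variable {X Y : Set V} {E F : Set (Sym2 V)} {u v : V} {f : Sym2 V → C} {c d c₁ c₂ : C}

lemma left_mem_incidentVertices (h : s(u, v) ∈ E) : u ∈ incidentVertices E :=
  ⟨_, h, Sym2.mem_mk_left u v⟩

lemma right_mem_incidentVertices (h : s(u, v) ∈ E) : v ∈ incidentVertices E :=
  ⟨_, h, Sym2.mem_mk_right u v⟩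

lemma altWalkStarts_subset_incidentVertices (E₁ E₂ E₃ : Set (Sym2 V)) :
    altWalkStarts E₁ E₂ E₃ f c d ⊆ incidentVertices E₁ :=
  fun _ ⟨_, _, _, h, _⟩ ↦ left_mem_incidentVertices h

lemma altWalkStarts_union_first (E₁ E₁' E₂ E₃ : Set (Sym2 V)) :
    altWalkStarts (E₁ ∪ E₁') E₂ E₃ f c d =
      altWalkStarts E₁ E₂ E₃ f c d ∪ altWalkStarts E₁' E₂ E₃ f c d := by
  ext
  simp only [altWalkStarts, mem_union, mem_ofPred_eq, or_and_right, exists_or]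

lemma altWalkStarts_union_second (E₁ E₂ E₂' E₃ : Set (Sym2 V)) :
    altWalkStarts E₁ (E₂ ∪ E₂') E₃ f c d =
      altWalkStarts E₁ E₂ E₃ f c d ∪ altWalkStarts E₁ E₂' E₃ f c d := by
  ext
  simp only [altWalkStarts, mem_union, mem_ofPred_eq, or_and_right, and_or_left, exists_or]

lemma altWalkStarts_union_third (E₁ E₂ E₃ E₃' : Set (Sym2 V)) :
    altWalkStarts E₁ E₂ (E₃ ∪ E₃') f c d =
      altWalkStarts E₁ E₂ E₃ f c d ∪ altWalkStarts E₁ E₂ E₃' f c d := by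
  ext
  simp only [altWalkStarts, mem_union, mem_ofPred_eq, or_and_right, and_or_left, exists_or]

lemma N5_eq_inter_altWalkStarts : N5 X E f c₁ c₂ = X ∩ altWalkStarts E E E f c₂ c₁ :=
  rfl

lemma swap_mem_N3 : (v, u) ∈ N3 X E f c₁ c₂ ↔ (u, v) ∈ N3 X E f c₂ c₁ := by
  simp only [N3, mem_ofPred_eq, Sym2.eq_swap (a := v), Sym2.eq_swap (b := u)]
  tauto

lemma setOf_N3_N7_eq_inter_altWalkStarts
    (hEF : incidentVertices E ∩ incidentVertices F ⊆ X ∩ Y) :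
    {v₀ | ∃ v₁, (v₁, v₀) ∈ N3 X E f c₁ c₂ ∧ v₁ ∈ N7 Y F f c₁ c₂} =
      X ∩ altWalkStarts E E F f c₂ c₁ := by
  ext v₀
  simp only [mem_ofPred_eq, swap_mem_N3]
  constructor
  · rintro ⟨v₂, ⟨hv₀, -, v₁, h₁, h₂, hc₁, hc₂⟩, -, v₃, h₃, hc₃⟩
    exact ⟨hv₀, v₁, v₂, v₃, h₁, h₂, h₃, hc₁, hc₂, hc₃⟩
  · rintro ⟨hv₀, v₁, v₂, v₃, h₁, h₂, h₃, hc₁, hc₂, hc₃⟩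
    have hv₂ := hEF ⟨right_mem_incidentVertices h₂, left_mem_incidentVertices h₃⟩
    exact ⟨v₂, ⟨hv₀, hv₂.1, v₁, h₁, h₂, hc₁, hc₂⟩, hv₂.2, v₃, h₃, hc₃⟩

lemma setOf_N9_N8_N7_eq_inter_altWalkStarts
    (hEF : incidentVertices E ∩ incidentVertices F ⊆ X ∩ Y) :
    {v₀ | ∃ v₁ v₂, (v₀, v₁) ∈ N9 X E f c₁ c₂ ∧ (v₁, v₂) ∈ N8 Y F f c₁ c₂ ∧
      v₂ ∈ N7 X E f c₁ c₂} = X ∩ altWalkStarts E F E f c₂ c₁ := by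
  ext v₀
  constructor
  · rintro ⟨v₁, v₂, ⟨hv₀, -, h₁, hc₁⟩, ⟨-, -, h₂, hc₂⟩, -, v₃, h₃, hc₃⟩
    exact ⟨hv₀, v₁, v₂, v₃, h₁, h₂, h₃, hc₁, hc₂, hc₃⟩
  · rintro ⟨hv₀, v₁, v₂, v₃, h₁, h₂, h₃, hc₁, hc₂, hc₃⟩
    have hv₁ := hEF ⟨right_mem_incidentVertices h₁, left_mem_incidentVertices h₂⟩
    have hv₂ := hEF ⟨left_mem_incidentVertices h₃, right_mem_incidentVertices h₂⟩
    exact ⟨v₁, v₂, ⟨hv₀, hv₁.1, h₁, hc₁⟩, ⟨hv₁.2, hv₂.2, h₂, hc₂⟩, hv₂.1, v₃, h₃, hc₃⟩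

lemma setOf_N9_N1_eq_inter_altWalkStarts
    (hEF : incidentVertices E ∩ incidentVertices F ⊆ X ∩ Y) :
    {v₀ | ∃ v₁, (v₀, v₁) ∈ N9 X E f c₁ c₂ ∧ v₁ ∈ N1 Y F f c₁ c₂} =
      X ∩ altWalkStarts E F F f c₂ c₁ := by
  ext v₀
  constructor
  · rintro ⟨v₁, ⟨hv₀, -, h₁, hc₁⟩, -, v₂, v₃, h₂, h₃, hc₂, hc₃⟩
    exact ⟨hv₀, v₁, v₂, v₃, h₁, h₂, h₃, hc₁, hc₂, hc₃⟩
  · rintro ⟨hv₀, v₁, v₂, v₃, h₁, h₂, h₃, hc₁, hc₂, hc₃⟩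
    have hv₁ := hEF ⟨right_mem_incidentVertices h₁, left_mem_incidentVertices h₂⟩
    exact ⟨v₁, ⟨hv₀, hv₁.1, h₁, hc₁⟩, hv₁.2, v₂, v₃, h₂, h₃, hc₂, hc₃⟩

lemma N5_union_crossingStarts (hEF : incidentVertices E ∩ incidentVertices F ⊆ X ∩ Y) :
    N5 X E f c₁ c₂ ∪ crossingStarts X Y E F f c₁ c₂ =
      X ∩ altWalkStarts E (E ∪ F) (E ∪ F) f c₂ c₁ := by
  rw [crossingStarts, N5_eq_inter_altWalkStarts, setOf_N3_N7_eq_inter_altWalkStarts hEF,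
    setOf_N9_N8_N7_eq_inter_altWalkStarts hEF, setOf_N9_N1_eq_inter_altWalkStarts hEF,
    altWalkStarts_union_second]
  simp only [altWalkStarts_union_third, inter_union_distrib_left, union_assoc]

end

lemma inter_union_eq_union_inter_diff {α : Type*} {X Y P Q : Set α} (hQ : X ∩ Q ⊆ Y) :
    X ∩ (P ∪ Q) = (X ∩ P ∪ Y ∩ Q) \ (Y \ X) := by
  grind

theorem recursion_N5_general (XL XR : Set V) (EL ER : Set (Sym2 V))
    (hER : XL ∩ incidentVertices ER ⊆ XR)
    (hshare : incidentVertices EL ∩ incidentVertices ER ⊆ XL)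
    (f : Sym2 V → C) (c₁ c₂ : C) :
    N5 XL (EL ∪ ER) f c₁ c₂ =
      (N5 XL EL f c₁ c₂ ∪ N5 XR ER f c₁ c₂ ∪
        (crossingStarts XL XR EL ER f c₁ c₂ ∪ crossingStarts XR XL ER EL f c₁ c₂)) \
          (XR \ XL) := by
  have hLR : incidentVertices EL ∩ incidentVertices ER ⊆ XL ∩ XR :=
    fun _ hv ↦ ⟨hshare hv, hER ⟨hshare hv, hv.2⟩⟩
  have hRL : incidentVertices ER ∩ incidentVertices EL ⊆ XR ∩ XL := by
    rwa [inter_comm, inter_comm XR]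
  have hstart : XL ∩ altWalkStarts ER (EL ∪ ER) (EL ∪ ER) f c₂ c₁ ⊆ XR :=
    (inter_subset_inter_right XL (altWalkStarts_subset_incidentVertices _ _ _)).trans hER
  rw [union_union_union_comm, N5_union_crossingStarts hLR, N5_union_crossingStarts hRL,
    union_comm ER EL, N5_eq_inter_altWalkStarts, altWalkStarts_union_first,
    inter_union_eq_union_inter_diff hstart]

theorem recursion_N5
    [Fintype V] [Fintype C] (G : SimpleGraph V)
    (Xi XL XR : Set V) (v' v'' : V)
    (hXL : XL = Xi)
    (hv' : Xi \ XR = {v'}) (hv'' : XR \ Xi = {v''})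
    (EL ER : Set (Sym2 V)) (hELG : EL ⊆ G.edgeSet) (hERG : ER ⊆ G.edgeSet)
    (hdisj : Disjoint EL ER)
    (hERv : ∀ e ∈ ER, v' ∉ e)
    (hELv : ∀ e ∈ EL, v'' ∉ e)
    (hshare : ∀ v : V, (∃ e ∈ EL, v ∈ e) → (∃ e ∈ ER, v ∈ e) → v ∈ Xi \ {v'})
    (f : Sym2 V → C) (c₁ c₂ : C) :
    N5 Xi (EL ∪ ER) f c₁ c₂ =
      (N5 XL EL f c₁ c₂ ∪ N5 XR ER f c₁ c₂ ∪
        ({v₀ | ∃ v₁, (v₁, v₀) ∈ N3 XL EL f c₁ c₂ ∧ v₁ ∈ N7 XR ER f c₁ c₂} ∪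
         {v₀ | ∃ v₁ v₂, (v₀, v₁) ∈ N9 XL EL f c₁ c₂ ∧ (v₁, v₂) ∈ N8 XR ER f c₁ c₂ ∧
           v₂ ∈ N7 XL EL f c₁ c₂} ∪
         {v₀ | ∃ v₁, (v₀, v₁) ∈ N9 XL EL f c₁ c₂ ∧ v₁ ∈ N1 XR ER f c₁ c₂} ∪
         {v₀ | ∃ v₁, (v₁, v₀) ∈ N3 XR ER f c₁ c₂ ∧ v₁ ∈ N7 XL EL f c₁ c₂} ∪
         {v₀ | ∃ v₁ v₂, (v₀, v₁) ∈ N9 XR ER f c₁ c₂ ∧ (v₁, v₂) ∈ N8 XL EL f c₁ c₂ ∧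
           v₂ ∈ N7 XR ER f c₁ c₂} ∪
         {v₀ | ∃ v₁, (v₀, v₁) ∈ N9 XR ER f c₁ c₂ ∧ v₁ ∈ N1 XL EL f c₁ c₂})) \ {v''} := by
  subst hXL
  have hER : XL ∩ incidentVertices ER ⊆ XR := fun v ⟨hvX, e, he, hve⟩ ↦
    by_contra fun hvR ↦ hERv e he (hv'.subset ⟨hvX, hvR⟩ ▸ hve)
  simpa only [crossingStarts, union_assoc, hv''] using
    recursion_N5_general XL XR EL ER hER (fun v hv ↦ (hshare v hv.1 hv.2).1) f c₁ c₂
end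

section
/- In the split setup, suppose f : E_i' → C is a valid partial coloring (a star edge coloring of (V, E_i')). Then for every pair (c₁,c₂) ∈ C×C: if (v₁,v₂) ∈ A_L^(3), then v₁ ∉ A_R^(7) or v₂ ∉ A_R^(6); and if (v₁,v₂) ∈ A_R^(3), then v₁ ∉ A_L^(7) or v₂ ∉ A_L^(6). -/
variable {V C : Type*}

/-- A partial coloring (of the edges in `Es`) is proper if no two distinct edges of `Es`
sharing a vertex receive the same color. -/
def IsProper (Es : Set (Sym2 V)) (f : Sym2 V → C) : Prop :=
  ∀ e₁ ∈ Es, ∀ e₂ ∈ Es, e₁ ≠ e₂ → (∃ v, v ∈ e₁ ∧ v ∈ e₂) → f e₁ ≠ f e₂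

/-- A partial coloring is valid (a star edge coloring of `(V, Es)`) if it is proper and no
path or cycle formed by four edges of `Es` is colored with only two colors.  A path or
cycle of length four consists of vertices `v₀, v₁, v₂, v₃, v₄` with consecutive edges in
`Es`, all distinct except that possibly `v₀ = v₄` (the cycle case). -/
def IsValid (Es : Set (Sym2 V)) (f : Sym2 V → C) : Prop :=
  IsProper Es f ∧
  ∀ v₀ v₁ v₂ v₃ v₄ : V,
    s(v₀, v₁) ∈ Es → s(v₁, v₂) ∈ Es → s(v₂, v₃) ∈ Es → s(v₃, v₄) ∈ Es →
    ([v₀, v₁, v₂, v₃] : List V).Nodup → ([v₁, v₂, v₃, v₄] : List V).Nodup →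
    ¬ ∃ c₁ c₂ : C,
      (f s(v₀, v₁) = c₁ ∨ f s(v₀, v₁) = c₂) ∧ (f s(v₁, v₂) = c₁ ∨ f s(v₁, v₂) = c₂) ∧
      (f s(v₂, v₃) = c₁ ∨ f s(v₂, v₃) = c₂) ∧ (f s(v₃, v₄) = c₁ ∨ f s(v₃, v₄) = c₂)

/-!
If the conclusion fails, the path from `v₁` to `v₂` colored `c₁, c₂` on one side, together with an
edge at `v₁` colored `c₂` and an edge at `v₂` colored `c₁` on the other side, is a walk of four
edges colored `c₂, c₁, c₂, c₁`. The two edges at `v₁` come from disjoint edge sets, so they are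
distinct and properness gives `c₁ ≠ c₂`. In a proper coloring, four-edge walks alternating between
two different colors repeat no vertex, except that the two ends may coincide; hence the walk is a
two-colored path or cycle with four edges.
-/

section StarEdgeColoring

variable {G : SimpleGraph V} {E F : Set (Sym2 V)} {f : Sym2 V → C} {v₀ v₁ v₂ v₃ v₄ : V}

theorem IsProper.eq_of_color_eq (hf : IsProper E f) (h₁ : s(v₀, v₁) ∈ E) (h₂ : s(v₀, v₂) ∈ E)
    (hcolor : f s(v₀, v₁) = f s(v₀, v₂)) : v₁ = v₂ := by
  by_contra hne
  exact hf _ h₁ _ h₂ (mt Sym2.congr_right.1 hne)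
    ⟨v₀, Sym2.mem_mk_left v₀ v₁, Sym2.mem_mk_left v₀ v₂⟩ hcolor

theorem IsProper.nodup_of_alternating (hf : IsProper E f) (hEG : E ⊆ G.edgeSet)
    (h₀₁ : s(v₀, v₁) ∈ E) (h₁₂ : s(v₁, v₂) ∈ E) (h₂₃ : s(v₂, v₃) ∈ E)
    (hne : f s(v₀, v₁) ≠ f s(v₁, v₂)) (heq : f s(v₀, v₁) = f s(v₂, v₃)) :
    [v₀, v₁, v₂, v₃].Nodup := by
  have ne₀₁ : v₀ ≠ v₁ := G.ne_of_adj (hEG h₀₁)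
  have ne₁₂ : v₁ ≠ v₂ := G.ne_of_adj (hEG h₁₂)
  have ne₂₃ : v₂ ≠ v₃ := G.ne_of_adj (hEG h₂₃)
  have ne₀₂ : v₀ ≠ v₂ := by
    rintro rfl
    exact hne (congrArg f Sym2.eq_swap)
  have ne₁₃ : v₁ ≠ v₃ := by
    rintro rfl
    exact hne (heq.trans (congrArg f Sym2.eq_swap))
  have ne₀₃ : v₀ ≠ v₃ := by
    rintro rfl
    rw [Sym2.eq_swap (a := v₂)] at h₂₃ heq
    exact ne₁₂ (hf.eq_of_color_eq h₀₁ h₂₃ heq)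
  simp [*]

theorem IsValid.color_ne_of_alternating (hf : IsValid E f) (hEG : E ⊆ G.edgeSet)
    (h₀₁ : s(v₀, v₁) ∈ E) (h₁₂ : s(v₁, v₂) ∈ E) (h₂₃ : s(v₂, v₃) ∈ E) (h₃₄ : s(v₃, v₄) ∈ E)
    (hne : f s(v₀, v₁) ≠ f s(v₁, v₂)) (heq : f s(v₀, v₁) = f s(v₂, v₃)) :
    f s(v₁, v₂) ≠ f s(v₃, v₄) := by
  intro heq'
  have nodup_init := hf.1.nodup_of_alternating hEG h₀₁ h₁₂ h₂₃ hne heq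
  have nodup_tail := hf.1.nodup_of_alternating hEG h₁₂ h₂₃ h₃₄ (heq ▸ hne.symm) heq'
  exact hf.2 v₀ v₁ v₂ v₃ v₄ h₀₁ h₁₂ h₂₃ h₃₄ nodup_init nodup_tail
    ⟨f s(v₀, v₁), f s(v₁, v₂), .inl rfl, .inr rfl, .inl heq.symm, .inr heq'.symm⟩

theorem IsProper.color_ne_of_disjoint (hf : IsProper (E ∪ F) f) (hEF : Disjoint E F)
    (h₁ : s(v₀, v₁) ∈ E) (h₂ : s(v₀, v₂) ∈ F) : f s(v₀, v₁) ≠ f s(v₀, v₂) := by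
  intro hcolor
  obtain rfl := hf.eq_of_color_eq (.inl h₁) (.inr h₂) hcolor
  exact hEF.notMem_of_mem_left h₁ h₂

theorem valid_condition_iii_general (hEG : E ⊆ G.edgeSet) (hFG : F ⊆ G.edgeSet)
    (hEF : Disjoint E F) (hf : IsValid (E ∪ F) f) (X Y : Set V) (c₁ c₂ : C)
    (h : (v₁, v₂) ∈ N3 X E f c₁ c₂) : v₁ ∉ N7 Y F f c₁ c₂ ∨ v₂ ∉ N6 Y F f c₁ c₂ := by
  rw [← not_and_or]
  rintro ⟨⟨-, a, h₁a, color₁a⟩, -, b, h₂b, color₂b⟩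
  obtain ⟨-, -, m, h₁m, hm₂, color₁m, colorm₂⟩ := h
  have hne := hf.1.color_ne_of_disjoint hEF h₁m h₁a
  rw [Sym2.eq_swap (b := a)] at h₁a color₁a hne
  exact hf.color_ne_of_alternating (Set.union_subset hEG hFG)
    (.inr h₁a) (.inl h₁m) (.inl hm₂) (.inr h₂b)
    hne.symm (color₁a.trans colorm₂.symm) (color₁m.trans color₂b.symm)

end StarEdgeColoring

theorem valid_condition_iii
    [Fintype V] [Fintype C] (G : SimpleGraph V)
    (Xi XL XR : Set V) (v' v'' : V)
    (hXL : XL = Xi)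
    (hv' : Xi \ XR = {v'}) (hv'' : XR \ Xi = {v''})
    (EL ER : Set (Sym2 V)) (hELG : EL ⊆ G.edgeSet) (hERG : ER ⊆ G.edgeSet)
    (hdisj : Disjoint EL ER)
    (hERv : ∀ e ∈ ER, v' ∉ e)
    (hELv : ∀ e ∈ EL, v'' ∉ e)
    (hshare : ∀ v : V, (∃ e ∈ EL, v ∈ e) → (∃ e ∈ ER, v ∈ e) → v ∈ Xi \ {v'})
    (f : Sym2 V → C) (hf : IsValid (EL ∪ ER) f) (c₁ c₂ : C) :
    (∀ v₁ v₂ : V, (v₁, v₂) ∈ N3 XL EL f c₁ c₂ →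
      v₁ ∉ N7 XR ER f c₁ c₂ ∨ v₂ ∉ N6 XR ER f c₁ c₂) ∧
    (∀ v₁ v₂ : V, (v₁, v₂) ∈ N3 XR ER f c₁ c₂ →
      v₁ ∉ N7 XL EL f c₁ c₂ ∨ v₂ ∉ N6 XL EL f c₁ c₂) := by
  exact ⟨fun _ _ => valid_condition_iii_general hELG hERG hdisj hf _ _ _ _,
    fun _ _ => valid_condition_iii_general hERG hELG hdisj.symm (Set.union_comm EL ER ▸ hf) _ _ _ _⟩
end

section
/- In the split setup, suppose f : E_i' → C is a valid partial coloring (a star edge coloring of (V, E_i')). Then for every pair (c₁,c₂) ∈ C×C: if (v₁,v₂) ∈ A_L^(8), then v₁ ∉ A_R^(2) or v₂ ∉ A_R^(7); and if (v₁,v₂) ∈ A_R^(8), then v₁ ∉ A_L^(2) or v₂ ∉ A_L^(7). -/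
variable {V C : Type*}

/-!
Suppose `v₁v₂` is an edge of one part colored `c₁`, while in the other part `v₁` starts a walk
`v₁, a, b` colored `c₂, c₁` and `v₂` has an edge `v₂w` colored `c₂`. Then `b, a, v₁, v₂, w` is an
alternating walk of length four, and `c₁ ≠ c₂` because the distinct edges `v₁v₂` and `v₁a` meet.
In a proper coloring an alternating walk of three edges cannot repeat a vertex, so the
walk is a two-colored path or cycle with four edges, which a star edge coloring forbids.
-/

section AlternatingWalk

variable {Es : Set (Sym2 V)} {f : Sym2 V → C} {c₁ c₂ : C}

theorem IsProper.eq_of_color_eq_s17 (hf : IsProper Es f) {e₁ e₂ : Sym2 V} {v : V}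
    (he₁ : e₁ ∈ Es) (he₂ : e₂ ∈ Es) (hv₁ : v ∈ e₁) (hv₂ : v ∈ e₂) (hcol : f e₁ = f e₂) :
    e₁ = e₂ := by
  by_contra hne
  exact hf e₁ he₁ e₂ he₂ hne ⟨v, hv₁, hv₂⟩ hcol

theorem endpoints_ne_of_color_ne (hc : c₁ ≠ c₂) {v₀ v₁ v₂ : V}
    (f₀₁ : f s(v₀, v₁) = c₁) (f₁₂ : f s(v₁, v₂) = c₂) : v₀ ≠ v₂ := by
  rintro rfl
  rw [Sym2.eq_swap] at f₁₂
  exact hc (f₀₁.symm.trans f₁₂)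

theorem IsProper.nodup_of_alternating_s17 (hf : IsProper Es f) (hloop : ∀ e ∈ Es, ¬ e.IsDiag)
    (hc : c₁ ≠ c₂) {v₀ v₁ v₂ v₃ : V}
    (h₀₁ : s(v₀, v₁) ∈ Es) (h₁₂ : s(v₁, v₂) ∈ Es) (h₂₃ : s(v₂, v₃) ∈ Es)
    (f₀₁ : f s(v₀, v₁) = c₁) (f₁₂ : f s(v₁, v₂) = c₂) (f₂₃ : f s(v₂, v₃) = c₁) :
    [v₀, v₁, v₂, v₃].Nodup := by
  have hne₀₁ : v₀ ≠ v₁ := hloop _ h₀₁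
  have hne₁₂ : v₁ ≠ v₂ := hloop _ h₁₂
  have hne₂₃ : v₂ ≠ v₃ := hloop _ h₂₃
  have hne₀₂ : v₀ ≠ v₂ := endpoints_ne_of_color_ne hc f₀₁ f₁₂
  have hne₁₃ : v₁ ≠ v₃ := endpoints_ne_of_color_ne hc.symm f₁₂ f₂₃
  have hne₀₃ : v₀ ≠ v₃ := by
    rintro rfl
    have hedge : s(v₀, v₁) = s(v₂, v₀) :=
      hf.eq_of_color_eq_s17 h₀₁ h₂₃ (Sym2.mem_mk_left _ _) (Sym2.mem_mk_right _ _)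
        (f₀₁.trans f₂₃.symm)
    exact hne₁₂ (Sym2.congr_right.1 (hedge.trans Sym2.eq_swap))
  simp [hne₀₁, hne₀₂, hne₀₃, hne₁₂, hne₁₃, hne₂₃]

theorem IsValid.not_alternating (hf : IsValid Es f) (hloop : ∀ e ∈ Es, ¬ e.IsDiag)
    (hc : c₁ ≠ c₂) {v₀ v₁ v₂ v₃ v₄ : V}
    (h₀₁ : s(v₀, v₁) ∈ Es) (h₁₂ : s(v₁, v₂) ∈ Es) (h₂₃ : s(v₂, v₃) ∈ Es) (h₃₄ : s(v₃, v₄) ∈ Es) :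
    ¬ (f s(v₀, v₁) = c₁ ∧ f s(v₁, v₂) = c₂ ∧ f s(v₂, v₃) = c₁ ∧ f s(v₃, v₄) = c₂) := by
  rintro ⟨f₀₁, f₁₂, f₂₃, f₃₄⟩
  exact hf.2 v₀ v₁ v₂ v₃ v₄ h₀₁ h₁₂ h₂₃ h₃₄
    (hf.1.nodup_of_alternating_s17 hloop hc h₀₁ h₁₂ h₂₃ f₀₁ f₁₂ f₂₃)
    (hf.1.nodup_of_alternating_s17 hloop hc.symm h₁₂ h₂₃ h₃₄ f₁₂ f₂₃ f₃₄)
    ⟨c₁, c₂, .inl f₀₁, .inr f₁₂, .inl f₂₃, .inr f₃₄⟩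

theorem IsValid.notMem_N2_or_notMem_N7_of_mem_N8 (hf : IsValid Es f) (hloop : ∀ e ∈ Es, ¬ e.IsDiag)
    {E₁ E₂ : Set (Sym2 V)} (hE₁ : E₁ ⊆ Es) (hE₂ : E₂ ⊆ Es) (hdisj : Disjoint E₁ E₂)
    {X Y : Set V} {v₁ v₂ : V} (hN8 : (v₁, v₂) ∈ N8 X E₁ f c₁ c₂) :
    v₁ ∉ N2 Y E₂ f c₁ c₂ ∨ v₂ ∉ N7 Y E₂ f c₁ c₂ := by
  rw [← not_and_or]
  rintro ⟨⟨-, a, b, h₁a, hab, f₁a, fab⟩, -, w, h₂w, f₂w⟩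
  obtain ⟨-, -, h₁₂, f₁₂⟩ := hN8
  have hc : c₁ ≠ c₂ := by
    rintro rfl
    exact hdisj.ne_of_mem h₁₂ h₁a <|
      hf.1.eq_of_color_eq_s17 (hE₁ h₁₂) (hE₂ h₁a) (Sym2.mem_mk_left _ _) (Sym2.mem_mk_left _ _)
        (f₁₂.trans f₁a.symm)
  rw [Sym2.eq_swap] at h₁a hab f₁a fab
  exact hf.not_alternating hloop hc (hE₂ hab) (hE₂ h₁a) (hE₁ h₁₂) (hE₂ h₂w) ⟨fab, f₁a, f₁₂, f₂w⟩

end AlternatingWalk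

theorem valid_condition_v_general (G : SimpleGraph V) (XL XR : Set V)
    (EL ER : Set (Sym2 V)) (hELG : EL ⊆ G.edgeSet) (hERG : ER ⊆ G.edgeSet)
    (hdisj : Disjoint EL ER)
    (f : Sym2 V → C) (hf : IsValid (EL ∪ ER) f) (c₁ c₂ : C) :
    (∀ v₁ v₂ : V, (v₁, v₂) ∈ N8 XL EL f c₁ c₂ →
      v₁ ∉ N2 XR ER f c₁ c₂ ∨ v₂ ∉ N7 XR ER f c₁ c₂) ∧
    (∀ v₁ v₂ : V, (v₁, v₂) ∈ N8 XR ER f c₁ c₂ →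
      v₁ ∉ N2 XL EL f c₁ c₂ ∨ v₂ ∉ N7 XL EL f c₁ c₂) := by
  have hloop : ∀ e ∈ EL ∪ ER, ¬ e.IsDiag := fun _ he =>
    G.not_isDiag_of_mem_edgeSet (Set.union_subset hELG hERG he)
  have hL : EL ⊆ EL ∪ ER := Set.subset_union_left
  have hR : ER ⊆ EL ∪ ER := Set.subset_union_right
  exact ⟨fun _ _ => hf.notMem_N2_or_notMem_N7_of_mem_N8 hloop hL hR hdisj,
    fun _ _ => hf.notMem_N2_or_notMem_N7_of_mem_N8 hloop hR hL hdisj.symm⟩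

theorem valid_condition_v
    [Fintype V] [Fintype C] (G : SimpleGraph V)
    (Xi XL XR : Set V) (v' v'' : V)
    (hXL : XL = Xi)
    (hv' : Xi \ XR = {v'}) (hv'' : XR \ Xi = {v''})
    (EL ER : Set (Sym2 V)) (hELG : EL ⊆ G.edgeSet) (hERG : ER ⊆ G.edgeSet)
    (hdisj : Disjoint EL ER)
    (hERv : ∀ e ∈ ER, v' ∉ e)
    (hELv : ∀ e ∈ EL, v'' ∉ e)
    (hshare : ∀ v : V, (∃ e ∈ EL, v ∈ e) → (∃ e ∈ ER, v ∈ e) → v ∈ Xi \ {v'})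
    (f : Sym2 V → C) (hf : IsValid (EL ∪ ER) f) (c₁ c₂ : C) :
    (∀ v₁ v₂ : V, (v₁, v₂) ∈ N8 XL EL f c₁ c₂ →
      v₁ ∉ N2 XR ER f c₁ c₂ ∨ v₂ ∉ N7 XR ER f c₁ c₂) ∧
    (∀ v₁ v₂ : V, (v₁, v₂) ∈ N8 XR ER f c₁ c₂ →
      v₁ ∉ N2 XL EL f c₁ c₂ ∨ v₂ ∉ N7 XL EL f c₁ c₂) :=
  valid_condition_v_general G XL XR EL ER hELG hERG hdisj f hf c₁ c₂
end
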